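/- Second fundamental theorem of FC for the general fractional derivative of Caputo type: let (κ, k) ∈ L₁ and f ∈ C¹_{-1}(0,∞). Then for all t > 0, (κ * ( *D_{(k)} f))(t) = f(t) − f(0), where f(0) = lim_{s→0+} f(s). -/

import Mathlib

open Real Filter MeasureTheory intervalIntegral

/-- The Laplace convolution `(f * g)(t) = ∫_0^t f(t-τ) g(τ) dτ`. -/
noncomputable def lconv (f g : ℝ → ℝ) : ℝ → ℝ :=
  fun t => ∫ τ in (0:ℝ)..t, f (t - τ) * g τ

/-- The space `C_{-1}(0,∞)`: functions representable as `t^p f₁(t)` with `p > -1`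
and `f₁` continuous on `[0,∞)`. -/
def CMinusOne (f : ℝ → ℝ) : Prop :=
  ∃ p : ℝ, p > -1 ∧ ∃ f₁ : ℝ → ℝ, ContinuousOn f₁ (Set.Ici 0) ∧
    ∀ t > (0:ℝ), f t = t ^ p * f₁ t


/-- The class `L₁` of Sonin kernel pairs: `κ, k ∈ C_{-1}(0,∞)` with `(κ * k)(t) = 1`
for all `t > 0`. -/
def SoninPair (κ k : ℝ → ℝ) : Prop :=
  CMinusOne κ ∧ CMinusOne k ∧ ∀ t > (0:ℝ), lconv κ k t = 1

/-!
By the fundamental theorem of calculus, `f = f(0) + 1 * f′` on `(0,∞)`. Convolving with `k`, and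
using that convolution is commutative and associative, `k * f = 1 * (f(0) k + k * f′)`: the function
`k * f` is a primitive of `f(0) k + k * f′`. By Lebesgue's differentiation theorem the Caputo
derivative of `f` is therefore `k * f′` almost everywhere, and
`κ * (k * f′) = (κ * k) * f′ = 1 * f′ = f - f(0)`.

For merely locally integrable kernels, convolution is associative only almost everywhere. Local
boundedness on `(0,∞)` makes all the convolutions converge at every point, so that the identity
holds everywhere.
-/

/-- Kernels of Volterra type on `(0,∞)`: integrable up to `0` and bounded on compact subsets of
`(0,∞)`. Nothing is required of the values at nonpositive arguments. This class contains
`C_{-1}(0,∞)`, is stable under the Laplace convolution, and makes the latter associative. -/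
structure IsVolterraKernel (f : ℝ → ℝ) : Prop where
  intervalIntegrable : ∀ ⦃T : ℝ⦄, 0 ≤ T → IntervalIntegrable f volume 0 T
  exists_norm_le : ∀ ⦃a : ℝ⦄, 0 < a → ∀ b, ∃ C, ∀ x ∈ Set.Icc a b, ‖f x‖ ≤ C

section LaplaceConvolution

variable {f g : ℝ → ℝ} {t : ℝ}

lemma lconv_comm (f g : ℝ → ℝ) : lconv f g = lconv g f := by
  ext t
  simpa [lconv, mul_comm] using
    (integral_comp_sub_left (fun τ => f (t - τ) * g τ) t (a := 0) (b := t)).symm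

lemma lconv_congr_right {g' : ℝ → ℝ} (ht : 0 ≤ t)
    (h : ∀ᵐ x, x ∈ Set.Ioc 0 t → g x = g' x) : lconv f g t = lconv f g' t := by
  refine integral_congr_ae ?_
  filter_upwards [h] with τ hτ hmem
  rw [hτ (Set.uIoc_of_le ht ▸ hmem)]

lemma lconv_congr_left {f' : ℝ → ℝ} (ht : 0 ≤ t)
    (h : ∀ᵐ x, x ∈ Set.Ioc 0 t → f x = f' x) : lconv f g t = lconv f' g t := by
  rw [lconv_comm f, lconv_comm f', lconv_congr_right ht h]

lemma lconv_const_left (c : ℝ) (g : ℝ → ℝ) (t : ℝ) :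
    lconv (fun _ => c) g t = c * ∫ x in 0..t, g x :=
  intervalIntegral.integral_const_mul c g

lemma lconv_one_left (g : ℝ → ℝ) : lconv (fun _ => 1) g = fun t => ∫ x in 0..t, g x := by
  ext t
  rw [lconv_const_left, one_mul]

lemma posConvolution_mul_eq_indicator_lconv (f g : ℝ → ℝ) :
    posConvolution f g (ContinuousLinearMap.mul ℝ ℝ) volume
      = (Set.Ioi 0).indicator (lconv f g) := by
  rw [lconv_comm]
  exact congrArg _ (funext fun t => integral_congr fun τ _ => mul_comm (f τ) (g (t - τ)))

lemma indicator_lconv (f g : ℝ → ℝ) :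
    (Set.Ioi 0).indicator (lconv f g)
      = convolution ((Set.Ioi 0).indicator f) ((Set.Ioi 0).indicator g)
          (ContinuousLinearMap.mul ℝ ℝ) volume := by
  rw [← posConvolution_mul_eq_indicator_lconv,
    posConvolution_eq_convolution_indicator _ _ _ volume]

end LaplaceConvolution

namespace IsVolterraKernel

variable {f g h : ℝ → ℝ} {t : ℝ}

protected lemma const (c : ℝ) : IsVolterraKernel fun _ => c where
  intervalIntegrable _ _ := intervalIntegrable_const
  exists_norm_le _ _ _ := ⟨‖c‖, fun _ _ => le_rfl⟩

protected lemma norm (hf : IsVolterraKernel f) : IsVolterraKernel fun x => ‖f x‖ where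
  intervalIntegrable _ hT := (hf.intervalIntegrable hT).norm
  exists_norm_le _ ha b := by simpa only [norm_norm] using hf.exists_norm_le ha b

lemma aestronglyMeasurable_indicator (hf : IsVolterraKernel f) :
    AEStronglyMeasurable ((Set.Ioi 0).indicator f) volume := by
  have hunion : ⋃ n : ℕ, Set.Ioc (0 : ℝ) n = Set.Ioi 0 :=
    Set.iUnion_Ioc_eq_Ioi_self_iff.2 fun x _ => exists_nat_ge x
  rw [aestronglyMeasurable_indicator_iff measurableSet_Ioi, ← hunion,
    aestronglyMeasurable_iUnion_iff]
  exact fun n => (hf.intervalIntegrable n.cast_nonneg).1.aestronglyMeasurable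

lemma intervalIntegrable_comp_sub_left (hf : IsVolterraKernel f) (ht : 0 ≤ t) :
    IntervalIntegrable (fun τ => f (t - τ)) volume 0 t := by
  simpa using ((hf.intervalIntegrable ht).comp_sub_left t).symm

-- For `t ≥ a`, at least one of the arguments `t - τ` and `τ` is at least `a / 2`.
lemma exists_norm_mul_comp_sub_le (hf : IsVolterraKernel f) (hg : IsVolterraKernel g) {a : ℝ}
    (ha : 0 < a) (b : ℝ) :
    ∃ A B : ℝ, 0 ≤ A ∧ 0 ≤ B ∧ ∀ t ∈ Set.Icc a b, ∀ τ ∈ Set.Ioc 0 t,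
      ‖f (t - τ) * g τ‖ ≤ A * ‖g τ‖ + B * ‖f (t - τ)‖ := by
  obtain ⟨A, hA⟩ := hf.exists_norm_le (half_pos ha) b
  obtain ⟨B, hB⟩ := hg.exists_norm_le (half_pos ha) b
  refine ⟨|A|, |B|, abs_nonneg A, abs_nonneg B, fun t ht τ hτ => ?_⟩
  rw [norm_mul]
  rcases le_total (a / 2) τ with hle | hle
  · have hgB : ‖g τ‖ ≤ |B| := (hB τ ⟨hle, hτ.2.trans ht.2⟩).trans (le_abs_self B)
    calc ‖f (t - τ)‖ * ‖g τ‖ ≤ |B| * ‖f (t - τ)‖ := by rw [mul_comm]; gcongr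
      _ ≤ |A| * ‖g τ‖ + |B| * ‖f (t - τ)‖ := le_add_of_nonneg_left (by positivity)
  · have hfA : ‖f (t - τ)‖ ≤ |A| :=
      (hA (t - τ) ⟨by linarith [ht.1], by linarith [ht.2, hτ.1]⟩).trans (le_abs_self A)
    calc ‖f (t - τ)‖ * ‖g τ‖ ≤ |A| * ‖g τ‖ := by gcongr
      _ ≤ |A| * ‖g τ‖ + |B| * ‖f (t - τ)‖ := le_add_of_nonneg_right (by positivity)

lemma intervalIntegrable_mul_comp_sub (hf : IsVolterraKernel f) (hg : IsVolterraKernel g)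
    (ht : 0 < t) : IntervalIntegrable (fun τ => f (t - τ) * g τ) volume 0 t := by
  obtain ⟨A, B, -, -, hAB⟩ := hf.exists_norm_mul_comp_sub_le hg ht t
  have hft := hf.intervalIntegrable_comp_sub_left ht.le
  have hgt := hg.intervalIntegrable ht.le
  refine ((hgt.norm.const_mul A).add (hft.norm.const_mul B)).mono_fun'
    (hft.def'.aestronglyMeasurable.mul hgt.def'.aestronglyMeasurable) ?_
  refine ae_restrict_of_forall_mem measurableSet_uIoc fun τ hτ => ?_
  exact hAB t (Set.right_mem_Icc.2 le_rfl) τ (Set.uIoc_of_le ht.le ▸ hτ)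

lemma convolutionExistsAt_indicator (hf : IsVolterraKernel f) (hg : IsVolterraKernel g) (t : ℝ) :
    ConvolutionExistsAt ((Set.Ioi 0).indicator f) ((Set.Ioi 0).indicator g) t
      (ContinuousLinearMap.mul ℝ ℝ) volume := by
  have hind : (fun τ => (Set.Ioi 0).indicator f τ * (Set.Ioi 0).indicator g (t - τ))
      = (Set.Ioo 0 t).indicator fun τ => g (t - τ) * f τ := by
    ext τ
    simp only [Set.indicator_apply, Set.mem_Ioi, Set.mem_Ioo, sub_pos]
    split_ifs <;> grind
  change Integrable (fun τ => (Set.Ioi 0).indicator f τ * (Set.Ioi 0).indicator g (t - τ)) volume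
  rw [hind, integrable_indicator_iff measurableSet_Ioo]
  rcases le_or_gt t 0 with ht | ht
  · simp [Set.Ioo_eq_empty ht.not_gt]
  · exact (hg.intervalIntegrable_mul_comp_sub hf ht).1.mono_set Set.Ioo_subset_Ioc_self

lemma intervalIntegrable_lconv (hf : IsVolterraKernel f) (hg : IsVolterraKernel g) (ht : 0 ≤ t) :
    IntervalIntegrable (lconv f g) volume 0 t := by
  have integrableOn_truncation {φ : ℝ → ℝ} (hφ : IsVolterraKernel φ) :
      IntegrableOn ((Set.Ioc 0 t).indicator φ) (Set.Ioi 0) :=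
    ((integrable_indicator_iff measurableSet_Ioc).2 (hφ.intervalIntegrable ht).1).integrableOn
  have hint := integrable_posConvolution (integrableOn_truncation hf) (integrableOn_truncation hg)
    (ContinuousLinearMap.mul ℝ ℝ)
  rw [posConvolution_mul_eq_indicator_lconv, integrable_indicator_iff measurableSet_Ioi] at hint
  rw [intervalIntegrable_iff_integrableOn_Ioc_of_le ht]
  refine (hint.mono_set Set.Ioc_subset_Ioi_self).congr_fun (fun s hs => ?_) measurableSet_Ioc
  have truncation_eq (φ : ℝ → ℝ) :
      ∀ᵐ x, x ∈ Set.Ioc 0 s → (Set.Ioc 0 t).indicator φ x = φ x :=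
    .of_forall fun x hx => Set.indicator_of_mem (Set.Ioc_subset_Ioc_right hs.2 hx) φ
  rw [lconv_congr_left hs.1.le (truncation_eq f), lconv_congr_right hs.1.le (truncation_eq g)]

protected lemma lconv (hf : IsVolterraKernel f) (hg : IsVolterraKernel g) :
    IsVolterraKernel (lconv f g) where
  intervalIntegrable _ hT := hf.intervalIntegrable_lconv hg hT
  exists_norm_le a ha b := by
    obtain ⟨A, B, hA, hB, hAB⟩ := hf.exists_norm_mul_comp_sub_le hg ha b
    refine ⟨A * (∫ τ in 0..b, ‖g τ‖) + B * ∫ τ in 0..b, ‖f τ‖, fun t ht => ?_⟩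
    have ht₀ : 0 ≤ t := ha.le.trans ht.1
    have hft := (hf.intervalIntegrable_comp_sub_left ht₀).norm.const_mul B
    have hgt := (hg.intervalIntegrable ht₀).norm.const_mul A
    have integral_mono {φ : ℝ → ℝ} (hφ : IsVolterraKernel φ) :
        ∫ τ in 0..t, ‖φ τ‖ ≤ ∫ τ in 0..b, ‖φ τ‖ :=
      integral_mono_interval le_rfl ht₀ ht.2 (.of_forall fun _ => norm_nonneg _)
        (hφ.intervalIntegrable (ht₀.trans ht.2)).norm
    calc ‖lconv f g t‖
        ≤ ∫ τ in 0..t, (A * ‖g τ‖ + B * ‖f (t - τ)‖) :=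
          norm_integral_le_of_norm_le ht₀ (.of_forall fun τ hτ => hAB t ht τ hτ) (hgt.add hft)
      _ = A * (∫ τ in 0..t, ‖g τ‖) + B * ∫ τ in 0..t, ‖f τ‖ := by
          rw [integral_add hgt hft, intervalIntegral.integral_const_mul,
            intervalIntegral.integral_const_mul, integral_comp_sub_left (fun τ => ‖f τ‖), sub_self,
            sub_zero]
      _ ≤ A * (∫ τ in 0..b, ‖g τ‖) + B * ∫ τ in 0..b, ‖f τ‖ := by
          gcongr
          exacts [integral_mono hg, integral_mono hf]

lemma lconv_assoc (hf : IsVolterraKernel f) (hg : IsVolterraKernel g) (hh : IsVolterraKernel h)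
    (ht : 0 < t) : lconv (lconv f g) h t = lconv f (lconv g h) t := by
  have norm_indicator (φ : ℝ → ℝ) :
      (fun x => ‖(Set.Ioi 0).indicator φ x‖) = (Set.Ioi 0).indicator fun x => ‖φ x‖ :=
    funext fun x => norm_indicator_eq_indicator_norm φ x
  suffices (Set.Ioi 0).indicator (lconv (lconv f g) h) t
      = (Set.Ioi 0).indicator (lconv f (lconv g h)) t by
    simpa only [Set.indicator_of_mem (Set.mem_Ioi.2 ht)] using this
  simp only [indicator_lconv]
  refine convolution_assoc _ _ _ _ (fun a b c => mul_assoc a b c)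
    hf.aestronglyMeasurable_indicator hg.aestronglyMeasurable_indicator
    hh.aestronglyMeasurable_indicator (.of_forall (hf.convolutionExistsAt_indicator hg)) ?_ ?_
  · simp only [norm_indicator]
    exact .of_forall (hg.norm.convolutionExistsAt_indicator hh.norm)
  · simp only [norm_indicator, ← indicator_lconv]
    exact hf.norm.convolutionExistsAt_indicator (hg.norm.lconv hh.norm) t

lemma lconv_add_right (hf : IsVolterraKernel f) (hg : IsVolterraKernel g)
    (hh : IsVolterraKernel h) (ht : 0 < t) :
    lconv f (fun x => g x + h x) t = lconv f g t + lconv f h t := by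
  simp only [lconv, mul_add]
  exact integral_add (hf.intervalIntegrable_mul_comp_sub hg ht)
    (hf.intervalIntegrable_mul_comp_sub hh ht)

end IsVolterraKernel

section Primitive

variable {k f f' : ℝ → ℝ} {f0 t : ℝ}

lemma lconv_integral_eq_integral_lconv (hk : IsVolterraKernel k) (hf' : IsVolterraKernel f')
    (ht : 0 < t) :
    lconv k (fun s => ∫ x in 0..s, f' x) t = ∫ s in 0..t, lconv k f' s := by
  have hone : IsVolterraKernel fun _ => 1 := .const 1
  calc lconv k (fun s => ∫ x in 0..s, f' x) t
      = lconv k (lconv (fun _ => 1) f') t := by rw [lconv_one_left]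
    _ = lconv (lconv (fun _ => 1) k) f' t := by rw [← hk.lconv_assoc hone hf' ht, lconv_comm k]
    _ = lconv (fun _ => 1) (lconv k f') t := hone.lconv_assoc hk hf' ht
    _ = ∫ s in 0..t, lconv k f' s := by rw [lconv_one_left]

lemma lconv_eq_integral_of_eq_add_integral (hk : IsVolterraKernel k) (hf' : IsVolterraKernel f')
    (hf : ∀ t > 0, f t = f0 + ∫ x in 0..t, f' x) (ht : 0 < t) :
    lconv k f t = ∫ s in 0..t, (f0 * k s + lconv k f' s) := by
  have hprim : IsVolterraKernel fun s => ∫ x in 0..s, f' x :=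
    lconv_one_left f' ▸ (IsVolterraKernel.const 1).lconv hf'
  calc lconv k f t = lconv k (fun s => f0 + ∫ x in 0..s, f' x) t :=
        lconv_congr_right ht.le (.of_forall fun s hs => hf s hs.1)
    _ = lconv k (fun _ => f0) t + lconv k (fun s => ∫ x in 0..s, f' x) t :=
        hk.lconv_add_right (.const f0) hprim ht
    _ = f0 * (∫ s in 0..t, k s) + ∫ s in 0..t, lconv k f' s := by
        rw [lconv_comm k, lconv_const_left, lconv_integral_eq_integral_lconv hk hf' ht]
    _ = ∫ s in 0..t, (f0 * k s + lconv k f' s) := by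
        rw [integral_add ((hk.intervalIntegrable ht.le).const_mul f0)
          (hk.intervalIntegrable_lconv hf' ht.le), intervalIntegral.integral_const_mul]

lemma ae_hasDerivAt_lconv (hk : IsVolterraKernel k) (hf' : IsVolterraKernel f')
    (hf : ∀ t > 0, f t = f0 + ∫ x in 0..t, f' x) (ht : 0 ≤ t) :
    ∀ᵐ s, s ∈ Set.Ioc 0 t → HasDerivAt (lconv k f) (f0 * k s + lconv k f' s) s := by
  have hint : IntervalIntegrable (fun s => f0 * k s + lconv k f' s) volume 0 t :=
    ((hk.intervalIntegrable ht).const_mul f0).add (hk.intervalIntegrable_lconv hf' ht)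
  filter_upwards [hint.ae_hasDerivAt_integral] with s hderiv hs
  refine (hderiv ?_ 0 Set.left_mem_uIcc).congr_of_eventuallyEq ?_
  · exact Set.uIcc_of_le ht ▸ Set.Ioc_subset_Icc_self hs
  · filter_upwards [Ioi_mem_nhds hs.1] with r hr
    exact lconv_eq_integral_of_eq_add_integral hk hf' hf hr

end Primitive

lemma CMinusOne.isVolterraKernel {f : ℝ → ℝ} (hf : CMinusOne f) : IsVolterraKernel f := by
  obtain ⟨p, hp, f₁, hf₁, hf_eq⟩ := hf
  refine ⟨fun T hT => ?_, fun a ha b => ?_⟩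
  · have hint : IntervalIntegrable (fun x => x ^ p * f₁ x) volume 0 T :=
      (intervalIntegrable_rpow' hp).mul_continuousOn
        (hf₁.mono (Set.uIcc_of_le hT ▸ Set.Icc_subset_Ici_self))
    exact hint.congr fun x hx => (hf_eq x (Set.uIoc_of_le hT ▸ hx).1).symm
  · have hpos : ∀ x ∈ Set.Icc a b, 0 < x := fun x hx => ha.trans_le hx.1
    have hcont : ContinuousOn f (Set.Icc a b) := by
      refine ContinuousOn.congr (f := fun x => x ^ p * f₁ x) ?_ fun x hx => hf_eq x (hpos x hx)
      exact (continuousOn_id.rpow_const fun x hx => .inl (hpos x hx).ne').mul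
        (hf₁.mono fun x hx => (hpos x hx).le)
    exact isCompact_Icc.exists_bound_of_continuousOn hcont

lemma eq_add_integral_deriv_of_tendsto {E : Type*} [NormedAddCommGroup E] [NormedSpace ℝ E]
    [CompleteSpace E] {f : ℝ → E} {f_a : E} {a b : ℝ} (hab : a < b)
    (hdiff : ∀ x ∈ Set.Ioc a b, DifferentiableAt ℝ f x)
    (hint : IntervalIntegrable (deriv f) volume a b)
    (hf_a : Tendsto f (nhdsWithin a (Set.Ioi a)) (nhds f_a)) :
    f b = f_a + ∫ x in a..b, deriv f x := by
  have hf_b : Tendsto f (nhdsWithin b (Set.Iio b)) (nhds (f b)) :=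
    (hdiff b (Set.right_mem_Ioc.2 hab)).continuousAt.tendsto.mono_left nhdsWithin_le_nhds
  rw [integral_eq_sub_of_hasDerivAt_of_tendsto hab
    (fun x hx => (hdiff x (Set.Ioo_subset_Ioc_self hx)).hasDerivAt) hint hf_a hf_b, add_sub_cancel]

theorem second_fundamental_theorem_Caputo_general {κ k f f' : ℝ → ℝ} {f0 : ℝ}
    (hκ : IsVolterraKernel κ) (hk : IsVolterraKernel k) (hκk : ∀ t > 0, lconv κ k t = 1)
    (hf' : IsVolterraKernel f') (hf : ∀ t > 0, f t = f0 + ∫ x in 0..t, f' x) :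
    ∀ t > 0, lconv κ (fun s => deriv (lconv k f) s - f0 * k s) t = f t - f0 := by
  intro t ht
  have caputo_eq : ∀ᵐ s, s ∈ Set.Ioc 0 t → deriv (lconv k f) s - f0 * k s = lconv k f' s := by
    filter_upwards [ae_hasDerivAt_lconv hk hf' hf ht.le] with s hderiv hs
    rw [(hderiv hs).deriv, add_sub_cancel_left]
  calc lconv κ (fun s => deriv (lconv k f) s - f0 * k s) t
      = lconv κ (lconv k f') t := lconv_congr_right ht.le caputo_eq
    _ = lconv (lconv κ k) f' t := (hκ.lconv_assoc hk hf' ht).symm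
    _ = lconv (fun _ => 1) f' t := lconv_congr_left ht.le (.of_forall fun s hs => hκk s hs.1)
    _ = f t - f0 := by rw [lconv_one_left, hf t ht, add_sub_cancel_left]

/-- Second fundamental theorem of FC for the GFD of Caputo type: for `(κ, k) ∈ L₁`
and `f ∈ C¹_{-1}(0,∞)` (i.e. `f ∈ C_{-1}(0,∞)` differentiable on `(0,∞)` with
continuous extension `f(0) = lim_{s→0+} f(s)` and `f′ ∈ C_{-1}(0,∞)`), one has
`(κ * ( *D_{(k)} f))(t) = f(t) − f(0)` for all `t > 0`, where
`( *D_{(k)} f)(s) = d/ds (k * f)(s) − f(0) k(s)`. -/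
theorem second_fundamental_theorem_Caputo (κ k f : ℝ → ℝ) (f0 : ℝ)
    (hκk : SoninPair κ k) (hf : CMinusOne f)
    (hdiff : ∀ t > (0:ℝ), DifferentiableAt ℝ f t)
    (hf0 : Tendsto f (nhdsWithin 0 (Set.Ioi 0)) (nhds f0))
    (hder : CMinusOne (deriv f)) :
    ∀ t > (0:ℝ),
      lconv κ (fun s => deriv (lconv k f) s - f0 * k s) t = f t - f0 :=
  second_fundamental_theorem_Caputo_general hκk.1.isVolterraKernel hκk.2.1.isVolterraKernel
    hκk.2.2 hder.isVolterraKernel fun _ ht => eq_add_integral_deriv_of_tendsto ht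
      (fun s hs => hdiff s hs.1) (hder.isVolterraKernel.intervalIntegrable ht.le) hf0
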